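/- Let G be a simple graph on the vertex set Fin n, let V be a finite set of cardinality N ≥ 1, and let h(0), …, h(n−1) be mutually independent random variables each uniformly distributed on V. Then the probability that h(i) = h(j) holds for every edge {i,j} of G equals N^{−(q−c)}, where q is the number of vertices of G of degree at least 1 and c is the number of connected components of G that contain at least one edge. -/

import Mathlib

open MeasureTheory Set

/-!
A map on the vertices agrees along every edge exactly when it factors through the connected
components, so `N ^ k` of the `N ^ n` equally likely maps qualify, where `k` is the number of all
components. Each isolated vertex is a component by itself, so it adds one to both `n` and `k`, and
therefore `n - k = q - c`.
-/

section Graph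

variable {ι : Type*} (G : SimpleGraph ι)

theorem connectedComponentMk_surjective : Function.Surjective G.connectedComponentMk :=
  Quot.mk_surjective

theorem setOf_forall_adj_eq_eq_range (V : Type*) :
    {f : ι → V | ∀ i j, G.Adj i j → f i = f j} =
      range fun g : G.ConnectedComponent → V => g ∘ G.connectedComponentMk := by
  ext f
  constructor
  · intro hadj
    have hreach : ∀ v w, G.Reachable v w → f v = f w := by
      rintro v w ⟨p⟩
      induction p with
      | nil => rfl
      | cons h _ ih => exact (hadj _ _ h).trans ih
    exact ⟨Quot.lift f hreach, rfl⟩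
  · rintro ⟨g, rfl⟩ i j hij
    exact congrArg g (SimpleGraph.ConnectedComponent.sound hij.reachable)

theorem ncard_setOf_forall_adj_eq [Finite ι] (V : Type*) :
    {f : ι → V | ∀ i j, G.Adj i j → f i = f j}.ncard =
      Nat.card V ^ Nat.card G.ConnectedComponent := by
  have hinj : Function.Injective
      fun g : G.ConnectedComponent → V => g ∘ G.connectedComponentMk :=
    (connectedComponentMk_surjective G).injective_comp_right
  rw [setOf_forall_adj_eq_eq_range, ← Nat.card_coe_set_eq, Nat.card_range_of_injective hinj,
    Nat.card_fun]

theorem eq_of_connectedComponentMk_eq_of_notMem_support {v w : ι} (hv : v ∉ G.support)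
    (h : G.connectedComponentMk v = G.connectedComponentMk w) : v = w := by
  by_contra hne
  exact hv (SimpleGraph.mem_support_of_reachable hne (SimpleGraph.ConnectedComponent.exact h))

theorem injOn_connectedComponentMk_compl_support : InjOn G.connectedComponentMk G.supportᶜ :=
  fun _ hv _ _ => eq_of_connectedComponentMk_eq_of_notMem_support G hv

theorem image_connectedComponentMk_compl_support :
    G.connectedComponentMk '' G.supportᶜ = (G.connectedComponentMk '' G.support)ᶜ := by
  apply Subset.antisymm
  · rintro _ ⟨v, hv, rfl⟩ ⟨w, hw, hwv⟩
    exact hv (eq_of_connectedComponentMk_eq_of_notMem_support G hv hwv.symm ▸ hw)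
  · exact subset_image_compl (connectedComponentMk_surjective G)

theorem ncard_support_add_card_connectedComponent [Finite ι] :
    G.support.ncard + Nat.card G.ConnectedComponent =
      (G.connectedComponentMk '' G.support).ncard + Nat.card ι := by
  have hcompl : (G.connectedComponentMk '' G.support)ᶜ.ncard = G.supportᶜ.ncard := by
    rw [← image_connectedComponentMk_compl_support,
      (injOn_connectedComponentMk_compl_support G).ncard_image]
  have hι := ncard_add_ncard_compl G.support
  have hcomp := ncard_add_ncard_compl (G.connectedComponentMk '' G.support)
  omega

end Graph

theorem measure_preimage_eq_ncard_mul {Ω α : Type*} [MeasurableSpace Ω] [MeasurableSpace α]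
    [MeasurableSingletonClass α] {μ : Measure Ω} {X : Ω → α} (hX : Measurable X) {s : Set α}
    (hs : s.Finite) {c : ENNReal} (hc : ∀ a ∈ s, μ (X ⁻¹' {a}) = c) :
    μ (X ⁻¹' s) = s.ncard * c := by
  lift s to Finset α using hs
  calc μ (X ⁻¹' s) = ∑ a ∈ s, μ (X ⁻¹' {a}) :=
        (sum_measure_preimage_singleton s fun a _ => hX (measurableSet_singleton a)).symm
    _ = (s : Set α).ncard * c := by
        rw [Finset.sum_congr rfl hc, Finset.sum_const, nsmul_eq_mul, ncard_coe_finset]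

theorem stmt6_general {Ω ι V : Type*} [MeasurableSpace Ω] [Finite ι] [Finite V] [Nonempty V]
    [MeasurableSpace V] [MeasurableSingletonClass V] (μ : Measure Ω) (G : SimpleGraph ι)
    (H : Ω → ι → V) (hmeas : ∀ i, Measurable fun ω => H ω i)
    (hind : ∀ f : ι → V, μ {ω | ∀ i, H ω i = f i} = (Nat.card V : ENNReal)⁻¹ ^ Nat.card ι) :
    μ {ω | ∀ i j, G.Adj i j → H ω i = H ω j} =
      (Nat.card V : ENNReal)⁻¹ ^
        (G.support.ncard - (G.connectedComponentMk '' G.support).ncard) := by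
  set N := Nat.card V
  set k := Nat.card G.ConnectedComponent
  set d := G.support.ncard - (G.connectedComponentMk '' G.support).ncard
  have hpoint : ∀ f, μ (H ⁻¹' {f}) = (N : ENNReal)⁻¹ ^ Nat.card ι := fun f => by
    simpa only [preimage, mem_singleton_iff, funext_iff] using hind f
  have hcard : Nat.card ι = k + d := by
    have hcount := ncard_support_add_card_connectedComponent G
    have hle : (G.connectedComponentMk '' G.support).ncard ≤ G.support.ncard := ncard_image_le
    omega
  have hcancel : (N : ENNReal) * (N : ENNReal)⁻¹ = 1 :=
    ENNReal.mul_inv_cancel (Nat.cast_ne_zero.2 Nat.card_pos.ne') (ENNReal.natCast_ne_top N)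
  calc μ (H ⁻¹' {f | ∀ i j, G.Adj i j → f i = f j})
      = (N ^ k : ℕ) * (N : ENNReal)⁻¹ ^ Nat.card ι := by
        rw [measure_preimage_eq_ncard_mul (measurable_pi_lambda H hmeas) (toFinite _)
          fun f _ => hpoint f, ncard_setOf_forall_adj_eq]
    _ = (N * (N : ENNReal)⁻¹) ^ k * (N : ENNReal)⁻¹ ^ d := by
        rw [hcard, pow_add, mul_pow, Nat.cast_pow, mul_assoc]
    _ = (N : ENNReal)⁻¹ ^ d := by rw [hcancel, one_pow, one_mul]

theorem stmt6 {Ω V : Type*} [MeasurableSpace Ω] [Fintype V]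
    [MeasurableSpace V] [MeasurableSingletonClass V]
    (μ : Measure Ω) [IsProbabilityMeasure μ]
    (n N : ℕ) (hN : 1 ≤ N) (hcard : Fintype.card V = N)
    (G : SimpleGraph (Fin n))
    (H : Ω → Fin n → V) (hmeas : ∀ i, Measurable fun ω => H ω i)
    -- the `H i` are mutually independent and each uniform on `V`:
    (hind : ∀ f : Fin n → V, μ {ω | ∀ i, H ω i = f i} = ((N : ENNReal))⁻¹ ^ n) :
    μ {ω | ∀ i j, G.Adj i j → H ω i = H ω j} =
      ((N : ENNReal))⁻¹ ^
        (Set.ncard {v : Fin n | ∃ u, G.Adj v u} -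
          Set.ncard {K : G.ConnectedComponent |
            ∃ v u, G.Adj v u ∧ G.connectedComponentMk v = K}) := by
  have : Nonempty V := Fintype.card_pos_iff.1 (hcard ▸ hN)
  simpa [hcard, image, SimpleGraph.support, SetRel.dom] using
    stmt6_general μ G H hmeas (by simpa [hcard] using hind)
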